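/- Let P be an N-point set in [0,1)², and let j ∈ ℕ₀² and m ∈ 𝔻_j be such that the dyadic interval I_{j,m} contains no point of P. Then the Haar coefficient of the discrepancy function satisfies μ_{j,m} = ∫_{[0,1)²} D_P(x)·h_{j,m}(x) dx = −N·2^{-2|j|-4}. -/

import Mathlib

open MeasureTheory

noncomputable section

/-- The half-open unit square `[0,1) × [0,1)` in `ℝ × ℝ`. -/
def unitSq : Set (ℝ × ℝ) := Set.Ico (0:ℝ) 1 ×ˢ Set.Ico (0:ℝ) 1

/-- The discrepancy function of the point configuration `p`. -/
def disc (N : ℕ) (p : Fin N → ℝ × ℝ) (x : ℝ × ℝ) : ℝ :=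
  (∑ i : Fin N, if 0 ≤ (p i).1 ∧ (p i).1 < x.1 ∧ 0 ≤ (p i).2 ∧ (p i).2 < x.2
    then (1:ℝ) else 0) - N * x.1 * x.2

/-- The dyadic interval `I_{j,m}`. -/
def dyadic (j m : ℕ × ℕ) : Set (ℝ × ℝ) :=
  Set.Ico ((m.1:ℝ)/2^j.1) (((m.1:ℝ)+1)/2^j.1) ×ˢ
    Set.Ico ((m.2:ℝ)/2^j.2) (((m.2:ℝ)+1)/2^j.2)

/-- The one-dimensional Haar function adapted to `[m/2^j, (m+1)/2^j)`. -/
def haar1 (j m : ℕ) (t : ℝ) : ℝ :=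
  if (m:ℝ)/2^j ≤ t ∧ t < (2*(m:ℝ)+1)/2^(j+1) then 1
  else if (2*(m:ℝ)+1)/2^(j+1) ≤ t ∧ t < ((m:ℝ)+1)/2^j then -1
  else 0

/-- The two-dimensional Haar function `h_{j,m}`. -/
def haar (j m : ℕ × ℕ) (x : ℝ × ℝ) : ℝ := haar1 j.1 m.1 x.1 * haar1 j.2 m.2 x.2

lemma haar1_eq (j m : ℕ) (f : ℝ → ℝ) (t : ℝ) :
    f t * haar1 j m t =
      (Set.Ico ((m:ℝ)/2^j) ((2*(m:ℝ)+1)/2^(j+1))).indicator f t -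
      (Set.Ico ((2*(m:ℝ)+1)/2^(j+1)) (((m:ℝ)+1)/2^j)).indicator f t := by
  unfold haar1
  simp only [Set.indicator_apply, Set.mem_Ico]
  split_ifs with h1 h2 h2
  · exact absurd h1.2 (not_lt.mpr h2.1)
  · simp
  · simp
  · simp

lemma haar_pts (j m : ℕ) (hm : m < 2 ^ j) :
    (0:ℝ) ≤ (m:ℝ)/2^j ∧ (2*(m:ℝ)+1)/2^(j+1) = (m:ℝ)/2^j + 1/2^(j+1) ∧
    ((m:ℝ)+1)/2^j = (m:ℝ)/2^j + 2 * (1/2^(j+1)) ∧ ((m:ℝ)+1)/2^j ≤ 1 ∧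
    (0:ℝ) < 1/2^(j+1) := by
  refine ⟨by positivity, ?_, ?_, ?_, by positivity⟩
  · field_simp; ring
  · field_simp; ring
  · rw [div_le_one (by positivity)]
    exact_mod_cast hm

lemma haar1_integral (j m : ℕ) (hm : m < 2 ^ j) (f : ℝ → ℝ)
    (hf : IntegrableOn f (Set.Ico 0 1)) :
    IntegrableOn (fun t => f t * haar1 j m t) (Set.Ico 0 1) ∧
    ∫ t in Set.Ico (0:ℝ) 1, f t * haar1 j m t =
      (∫ t in Set.Ico ((m:ℝ)/2^j) ((2*(m:ℝ)+1)/2^(j+1)), f t) -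
      ∫ t in Set.Ico ((2*(m:ℝ)+1)/2^(j+1)) (((m:ℝ)+1)/2^j), f t := by
  obtain ⟨h0, h1, h2, h3, h4⟩ := haar_pts j m hm
  have e : (fun t => f t * haar1 j m t) = fun t => 
      (Set.Ico ((m:ℝ)/2^j) ((2*(m:ℝ)+1)/2^(j+1))).indicator f t -
      (Set.Ico ((2*(m:ℝ)+1)/2^(j+1)) (((m:ℝ)+1)/2^j)).indicator f t :=
    funext fun t => haar1_eq j m f t
  have i1 := Integrable.indicator hf
    (measurableSet_Ico (a := (m:ℝ)/2^j) (b := (2*(m:ℝ)+1)/2^(j+1)))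
  have i2 := Integrable.indicator hf
    (measurableSet_Ico (a := (2*(m:ℝ)+1)/2^(j+1)) (b := ((m:ℝ)+1)/2^j))
  rw [e]
  refine ⟨i1.sub i2, ?_⟩
  rw [integral_sub i1 i2, setIntegral_indicator measurableSet_Ico,
    setIntegral_indicator measurableSet_Ico,
    Set.inter_eq_right.mpr (Set.Ico_subset_Ico h0 (by linarith)),
    Set.inter_eq_right.mpr (Set.Ico_subset_Ico (by linarith) h3)]

lemma haar1_id (j m : ℕ) (hm : m < 2 ^ j) :
    IntegrableOn (fun t => t * haar1 j m t) (Set.Ico 0 1) ∧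
    ∫ t in Set.Ico (0:ℝ) 1, t * haar1 j m t = -(1/2^(j+1))^2 := by
  obtain ⟨h0, h1, h2, h3, h4⟩ := haar_pts j m hm
  have hI : IntegrableOn (fun t : ℝ => t) (Set.Ico 0 1) :=
    (continuous_id.integrableOn_Icc (a := (0:ℝ)) (b := 1)).mono_set Set.Ico_subset_Icc_self
  obtain ⟨a, b⟩ := haar1_integral j m hm (fun t => t) hI
  refine ⟨a, b.trans ?_⟩
  rw [integral_Ico_eq_integral_Ioc, integral_Ico_eq_integral_Ioc,
    ← intervalIntegral.integral_of_le (by linarith),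
    ← intervalIntegral.integral_of_le (by linarith), integral_id, integral_id, h1, h2]
  ring

lemma step_integrable (a : ℝ) :
    IntegrableOn (fun t : ℝ => if a < t then (1:ℝ) else 0) (Set.Ico 0 1) := by
  have : (fun t : ℝ => if a < t then (1:ℝ) else 0) = (Set.Ioi a).indicator (fun _ => 1) := by
    ext t; simp [Set.indicator_apply]
  rw [this]
  exact Integrable.indicator (integrableOn_const (by simp)) measurableSet_Ioi

lemma haar1_step (j m : ℕ) (hm : m < 2 ^ j) (a : ℝ)
    (ha : a ∉ Set.Ico ((m:ℝ)/2^j) (((m:ℝ)+1)/2^j)) :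
    ∫ t in Set.Ico (0:ℝ) 1, (if a < t then (1:ℝ) else 0) * haar1 j m t = 0 := by
  obtain ⟨h0, h1, h2, h3, h4⟩ := haar_pts j m hm
  rw [(haar1_integral j m hm _ (step_integrable a)).2]
  rcases lt_or_ge a ((m:ℝ)/2^j) with h | h
  · rw [setIntegral_congr_fun (g := fun _ => (1:ℝ)) measurableSet_Ico,
      setIntegral_congr_fun (g := fun _ => (1:ℝ)) 
        (s := Set.Ico ((2*(m:ℝ)+1)/2^(j+1)) (((m:ℝ)+1)/2^j)) measurableSet_Ico]
    · rw [integral_Ico_eq_integral_Ioc, integral_Ico_eq_integral_Ioc,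
        ← intervalIntegral.integral_of_le (by linarith),
        ← intervalIntegral.integral_of_le (by linarith), intervalIntegral.integral_const,
        intervalIntegral.integral_const, h1, h2]
      simp only [smul_eq_mul]
      ring
    · intro t ht
      exact if_pos (by linarith [ht.1])
    · intro t ht
      exact if_pos (by linarith [ht.1])
  · have hb : ((m:ℝ)+1)/2^j ≤ a := by
      by_contra hc
      exact ha ⟨h, not_le.mp hc⟩
    rw [setIntegral_congr_fun (g := fun _ => (0:ℝ)) measurableSet_Ico,
      setIntegral_congr_fun (g := fun _ => (0:ℝ)) 
        (s := Set.Ico ((2*(m:ℝ)+1)/2^(j+1)) (((m:ℝ)+1)/2^j)) measurableSet_Ico]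
    · simp
    · intro t ht
      exact if_neg (by linarith [ht.2])
    · intro t ht
      exact if_neg (by linarith [ht.2])

lemma prod_int (f g : ℝ → ℝ) (hf : IntegrableOn f (Set.Ico 0 1))
    (hg : IntegrableOn g (Set.Ico 0 1)) :
    IntegrableOn (fun x : ℝ × ℝ => f x.1 * g x.2) unitSq := by
  unfold unitSq IntegrableOn
  rw [Measure.volume_eq_prod, ← Measure.prod_restrict]
  exact Integrable.mul_prod hf hg

lemma prod_val (f g : ℝ → ℝ) :
    ∫ x in unitSq, f x.1 * g x.2 =
      (∫ t in Set.Ico (0:ℝ) 1, f t) * ∫ t in Set.Ico (0:ℝ) 1, g t := by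
  unfold unitSq
  rw [Measure.volume_eq_prod]
  exact setIntegral_prod_mul f g _ _

/-- If `I_{j,m}` contains no point of the `N`-point set `P ⊂ [0,1)²`, then the Haar
coefficient of the discrepancy function is `μ_{j,m} = −N·2^{-2|j|-4}`. -/
theorem haar_coeff_no_point (N : ℕ) (p : Fin N → ℝ × ℝ) (hp : ∀ i, p i ∈ unitSq)
    (j m : ℕ × ℕ) (hm1 : m.1 < 2 ^ j.1) (hm2 : m.2 < 2 ^ j.2)
    (hempty : ∀ i, p i ∉ dyadic j m) :
    ∫ x in unitSq, disc N p x * haar j m x = -(N : ℝ) / 2 ^ (2 * (j.1 + j.2) + 4) := by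
  let F : Fin N → ℝ × ℝ → ℝ := fun i x =>
    ((if (p i).1 < x.1 then (1:ℝ) else 0) * haar1 j.1 m.1 x.1) *
      ((if (p i).2 < x.2 then (1:ℝ) else 0) * haar1 j.2 m.2 x.2)
  let G : ℝ × ℝ → ℝ := fun x => (x.1 * haar1 j.1 m.1 x.1) * (x.2 * haar1 j.2 m.2 x.2)
  have e : (fun x => disc N p x * haar j m x) = fun x => (∑ i, F i x) - N * G x := by
    ext x
    simp only [disc, haar, sub_mul, Finset.sum_mul, F, G]
    congr 1
    · refine Finset.sum_congr rfl fun i _ => ?_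
      have h1 : 0 ≤ (p i).1 := (hp i).1.1
      have h2 : 0 ≤ (p i).2 := (hp i).2.1
      by_cases a : (p i).1 < x.1 <;> by_cases b : (p i).2 < x.2 <;> simp [h1, h2, a, b]
    · ring
  have hF : ∀ i, IntegrableOn (F i) unitSq := fun i =>
    prod_int (fun t => (if (p i).1 < t then (1:ℝ) else 0) * haar1 j.1 m.1 t)
      (fun t => (if (p i).2 < t then (1:ℝ) else 0) * haar1 j.2 m.2 t)
      (haar1_integral _ _ hm1 _ (step_integrable _)).1
      (haar1_integral _ _ hm2 _ (step_integrable _)).1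
  have hG : IntegrableOn G unitSq :=
    prod_int (fun t => t * haar1 j.1 m.1 t) (fun t => t * haar1 j.2 m.2 t)
      (haar1_id _ _ hm1).1 (haar1_id _ _ hm2).1
  have vF : ∀ i, ∫ x in unitSq, F i x = 0 := by
    intro i
    have := prod_val (fun t => (if (p i).1 < t then (1:ℝ) else 0) * haar1 j.1 m.1 t)
      (fun t => (if (p i).2 < t then (1:ℝ) else 0) * haar1 j.2 m.2 t)
    refine this.trans ?_
    have he := hempty i
    simp only [dyadic, Set.mem_prod, not_and_or] at he
    rcases he with he | he
    · rw [haar1_step _ _ hm1 _ he, zero_mul]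
    · rw [haar1_step _ _ hm2 _ he, mul_zero]
  have vG : ∫ x in unitSq, G x = (-(1/2^(j.1+1))^2) * (-(1/2^(j.2+1))^2) := by
    have := prod_val (fun t => t * haar1 j.1 m.1 t) (fun t => t * haar1 j.2 m.2 t)
    rw [(haar1_id _ _ hm1).2, (haar1_id _ _ hm2).2] at this
    exact this
  rw [e, integral_sub (integrable_finsetSum _ fun i _ => hF i) (hG.const_mul _),
    integral_finsetSum _ (fun i _ => hF i), integral_const_mul, vG]
  simp only [vF, Finset.sum_const_zero]
  field_simp
  ring


end
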